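/- Let t ≥ 1 and n ≥ 0 be integers and let q ∈ ℂ with 0 < |q| < 1. Then - Σ_{ℓ=0}^{n+1} [ q^{(t+1)ℓ^2 - ℓ} (1 - q^{2ℓ}) / ((q;q)_{n+1-ℓ} (q;q)_{n+1+ℓ}) ] · Σ_{k=-ℓ}^{ℓ-1} (-1)^k q^{-(2t+1)k(k+1)/2 + k} = Σ_{n+1 = k_t ≥ k_{t-1} ≥ … ≥ k_1 ≥ 1} Π_{i=1}^{t-1} q^{k_i^2} [k_{i+1} + k_i - i + 2·Σ_{j=1}^{i-1} k_j choose k_{i+1} - k_i]_q, where the right-hand sum is over all weakly decreasing (t-1)-tuples of integers k_{t-1} ≥ … ≥ k_1 ≥ 1 with k_t fixed equal to n+1 (for t = 1 the right-hand side is 1). In particular, the cyclotomic coefficient C_n(T*_{(2,2t+1)}; q) equals q^{n+1-t} times the right-hand multisum, which is q^{n+1-t} times a polynomial in q with nonnegative integer coefficients. -/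

import Mathlib

open Finset

/-- The finite q-Pochhammer symbol `(a;q)_n`. -/
noncomputable def qPoch (q a : ℂ) (n : ℕ) : ℂ := ∏ j ∈ Finset.range n, (1 - a * q ^ j)

/-- The Gaussian binomial coefficient `[n choose k]_q`, zero outside `0 ≤ k ≤ n`. -/
noncomputable def qBinom (q : ℂ) (n k : ℤ) : ℂ :=
  if 0 ≤ k ∧ k ≤ n then
    ∏ j ∈ Finset.range k.toNat, (1 - q ^ (n - k + (j : ℤ) + 1)) / (1 - q ^ ((j : ℤ) + 1))
  else 0

/-- The product `Π_{i=1}^{t-1} q^{k_i^2} [k_{i+1}+k_i-i+2Σ_{j<i}k_j choose k_{i+1}-k_i]_q`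
(tuple of length `t+1`, i.e. the paper's `t` equals `t+1`). -/
noncomputable def UtProd (q : ℂ) (t : ℕ) (K : Fin (t+1) → ℕ) : ℂ :=
  ∏ i : Fin t, (q ^ (K i.castSucc ^ 2) *
    qBinom q ((K i.succ : ℤ) + (K i.castSucc : ℤ) - ((i : ℕ) + 1)
        + 2 * ∑ j ∈ Finset.univ.filter (fun j : Fin (t+1) => (j : ℕ) < (i : ℕ)), (K j : ℤ))
      ((K i.succ : ℤ) - (K i.castSucc : ℤ)))

/-- Gaussian binomial `[d+ν choose d]` for all integers. -/
noncomputable def bb (q : ℂ) (d ν : ℤ) : ℂ :=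
  if d < 0 then 0 else
    ∏ j ∈ Finset.range d.toNat, (1 - q ^ (ν + (j : ℤ) + 1)) / (1 - q ^ ((j : ℤ) + 1))

/-- reciprocal q-factorial -/
noncomputable def rr (q : ℂ) (d : ℤ) : ℂ :=
  if d < 0 then 0 else (qPoch q q d.toNat)⁻¹

lemma one_sub_ne (q : ℂ) (hq1 : ‖q‖ < 1) (j : ℕ) : 1 - q ^ (j + 1) ≠ 0 := by
  intro h
  have h1 : q ^ (j+1) = 1 := by linear_combination -h
  have h2 : ‖q‖ ^ (j+1) = 1 := by rw [← norm_pow, h1, norm_one]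
  have h3 : ‖q‖ ^ (j+1) < 1 := pow_lt_one₀ (norm_nonneg q) hq1 (by omega)
  linarith

lemma rr_pred (q : ℂ) (hq1 : ‖q‖ < 1) (d : ℤ) :
    rr q (d - 1) = (1 - q ^ d) * rr q d := by
  rcases lt_trichotomy d 0 with h | h | h
  · simp [rr, h, show d - 1 < 0 by omega]
  · subst h; simp [rr]
  · obtain ⟨m, rfl⟩ : ∃ m : ℕ, d = m + 1 := ⟨(d-1).toNat, by omega⟩
    have := one_sub_ne q hq1 m
    have e1 : ((m:ℤ) + 1 - 1).toNat = m := by omega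
    have e2 : ((m:ℤ) + 1).toNat = m + 1 := by omega
    have e3 : q ^ ((m:ℤ)+1) = q ^ (m+1) := by exact_mod_cast rfl
    rw [rr, rr, if_neg (by omega), if_neg (by omega), e1, e2, e3, qPoch, qPoch,
      Finset.prod_range_succ, mul_inv]
    have e4 : q * q ^ m = q ^ (m+1) := by ring
    rw [e4]; field_simp

lemma bb_pascal (q : ℂ) (hq : q ≠ 0) (hq1 : ‖q‖ < 1) (d ν : ℤ) :
    bb q d ν - bb q (d - 1) ν = q ^ d * bb q d (ν - 1) := by
  rcases lt_trichotomy d 0 with h | h | h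
  · simp [bb, h, show d - 1 < 0 by omega]
  · subst h; simp [bb]
  · obtain ⟨m, rfl⟩ : ∃ m : ℕ, d = m + 1 := ⟨(d-1).toNat, by omega⟩
    have e1 : ((m:ℤ) + 1 - 1).toNat = m := by omega
    have e2 : ((m:ℤ) + 1).toNat = m + 1 := by omega
    rw [bb, bb, bb, if_neg (by omega), if_neg (by omega), if_neg (by omega), e1, e2]
    have h1 : ∏ j ∈ Finset.range (m+1), (1 - q ^ (ν - 1 + (j : ℤ) + 1)) / (1 - q ^ ((j : ℤ) + 1))
       = (1 - q ^ ν) / (1 - q ^ ((m:ℤ)+1)) * ∏ j ∈ Finset.range m, (1 - q ^ (ν + (j : ℤ) + 1)) / (1 - q ^ ((j : ℤ) + 1)) := by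
      rw [Finset.prod_div_distrib, Finset.prod_div_distrib, Finset.prod_range_succ',
        Finset.prod_range_succ (fun j : ℕ => 1 - q ^ ((j:ℤ)+1))]
      have : ∏ k ∈ Finset.range m, (1 - q ^ (ν - 1 + ((k + 1 : ℕ) : ℤ) + 1)) =
         ∏ k ∈ Finset.range m, (1 - q ^ (ν + (k : ℤ) + 1)) := by
        apply Finset.prod_congr rfl
        intro k _
        congr 2; push_cast; ring
      rw [this]
      have e : ν - 1 + ((0:ℕ):ℤ) + 1 = ν := by simp
      rw [e, div_mul_div_comm]
      ring
    rw [h1, Finset.prod_range_succ]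
    have := one_sub_ne q hq1 m
    have e3 : q ^ ((m:ℤ)+1) = q ^ (m+1) := by exact_mod_cast rfl
    have e4 : q ^ (ν + (m:ℤ)+1) = q ^ ν * q ^ (m+1) := by
      rw [← e3, ← zpow_add₀ hq]; congr 1; ring
    rw [e3, e4]
    field_simp
    ring

/-- refined multisum -/
noncomputable def Gh (q : ℂ) : ℕ → ℕ → ℕ → (ℤ → ℂ) → ℂ
  | 0, 0, s, F => if s = 0 then 0 else F 0
  | 0, 1, s, F => if s = 1 then q⁻¹ * F (-1) else 0
  | 0, _+2, _, _ => 0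
  | t+1, 0, s, F => ∑ k ∈ Finset.range (s+1), q ^ (k^2) *
      Gh q t 0 k (fun μ => bb q ((s:ℤ) - k) (μ + 2 * k - 1) * F (μ + 2 * k - 1))
  | t+1, i+1, s, F => ∑ k ∈ Finset.range (s+1), q ^ ((k:ℤ)^2 - k) *
      Gh q t i k (fun μ => bb q ((s:ℤ) - k) (μ + 2 * k - 2) * F (μ + 2 * k - 2))

lemma Gh_lin (q : ℂ) (t : ℕ) : ∀ (i s : ℕ) (F H : ℤ → ℂ) (a c : ℂ),
    Gh q t i s (fun μ => a * F μ + c * H μ) = a * Gh q t i s F + c * Gh q t i s H := by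
  induction t with
  | zero =>
    intro i s F H a c
    match i with
    | 0 => simp only [Gh]; split_ifs <;> ring
    | 1 => simp only [Gh]; split_ifs <;> ring
    | i+2 => simp [Gh]
  | succ t ih =>
    intro i s F H a c
    match i with
    | 0 =>
      simp only [Gh, Finset.mul_sum, ← Finset.sum_add_distrib]
      apply Finset.sum_congr rfl
      intro k _
      have := ih 0 k (fun μ => bb q ((s:ℤ) - k) (μ + 2 * k - 1) * F (μ + 2 * k - 1))
        (fun μ => bb q ((s:ℤ) - k) (μ + 2 * k - 1) * H (μ + 2 * k - 1)) a c
      rw [mul_left_comm a, mul_left_comm c, ← mul_add, ← this]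
      congr 2; funext μ; ring
    | i+1 =>
      simp only [Gh, Finset.mul_sum, ← Finset.sum_add_distrib]
      apply Finset.sum_congr rfl
      intro k _
      have := ih i k (fun μ => bb q ((s:ℤ) - k) (μ + 2 * k - 2) * F (μ + 2 * k - 2))
        (fun μ => bb q ((s:ℤ) - k) (μ + 2 * k - 2) * H (μ + 2 * k - 2)) a c
      rw [mul_left_comm a, mul_left_comm c, ← mul_add, ← this]
      congr 2; funext μ; ring

lemma Gh_sub (q : ℂ) (t i s : ℕ) (F H : ℤ → ℂ) :
    Gh q t i s (fun μ => F μ - H μ) = Gh q t i s F - Gh q t i s H := by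
  have := Gh_lin q t i s F H 1 (-1)
  rw [show (fun μ => F μ - H μ) = (fun μ => 1 * F μ + (-1) * H μ) from funext fun μ => by ring, this]
  ring

lemma Gh_smul (q : ℂ) (t i s : ℕ) (F : ℤ → ℂ) (a : ℂ) :
    Gh q t i s (fun μ => a * F μ) = a * Gh q t i s F := by
  have := Gh_lin q t i s F F a 0
  rw [show (fun μ => a * F μ) = (fun μ => a * F μ + 0 * F μ) from funext fun μ => by ring, this]
  ring

lemma Gh_zero_fun (q : ℂ) (t i s : ℕ) : Gh q t i s (fun _ => 0) = 0 := by
  have := Gh_smul q t i s (fun _ => 0) 0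
  simpa using this

lemma Gh_zero (q : ℂ) (t : ℕ) : ∀ (i : ℕ) (F : ℤ → ℂ), Gh q t i 0 F = 0 := by
  induction t with
  | zero =>
    intro i F
    match i with
    | 0 => simp [Gh]
    | 1 => simp [Gh]
    | i+2 => simp [Gh]
  | succ t ih =>
    intro i F
    match i with
    | 0 => simp [Gh, ih]
    | i+1 => simp [Gh, ih]

lemma bb_neg (q : ℂ) (d ν : ℤ) (h : d < 0) : bb q d ν = 0 := by simp [bb, h]

/-- extended range versions -/
lemma Gh_succ_zero_ext (q : ℂ) (t s : ℕ) (F : ℤ → ℂ) :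
    Gh q (t+1) 0 s F = ∑ k ∈ Finset.range (s+2), q ^ (k^2) *
      Gh q t 0 k (fun μ => bb q ((s:ℤ) - k) (μ + 2 * k - 1) * F (μ + 2 * k - 1)) := by
  rw [Finset.sum_range_succ]
  have : (fun μ : ℤ => bb q ((s:ℤ) - (s+1 : ℕ)) (μ + 2 * (s+1:ℕ) - 1) * F (μ + 2 * (s+1 : ℕ) - 1)) = fun _ => 0 := by
    funext μ; rw [bb_neg _ _ _ (by push_cast; omega), zero_mul]
  rw [this, Gh_zero_fun, mul_zero, add_zero]
  rfl

lemma Gh_succ_succ_ext (q : ℂ) (t i s : ℕ) (F : ℤ → ℂ) :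
    Gh q (t+1) (i+1) s F = ∑ k ∈ Finset.range (s+2), q ^ ((k:ℤ)^2 - k) *
      Gh q t i k (fun μ => bb q ((s:ℤ) - k) (μ + 2 * k - 2) * F (μ + 2 * k - 2)) := by
  rw [Finset.sum_range_succ]
  have : (fun μ : ℤ => bb q ((s:ℤ) - (s+1 : ℕ)) (μ + 2 * (s+1:ℕ) - 2) * F (μ + 2 * (s+1 : ℕ) - 2)) = fun _ => 0 := by
    funext μ; rw [bb_neg _ _ _ (by push_cast; omega), zero_mul]
  rw [this, Gh_zero_fun, mul_zero, add_zero]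
  rfl

lemma R0 (q : ℂ) (hq : q ≠ 0) (hq1 : ‖q‖ < 1) (t s : ℕ) (F : ℤ → ℂ) :
    Gh q t 0 (s+1) (fun μ => F (μ - 1)) - Gh q t 0 s (fun μ => F (μ - 1))
      = q ^ (s+1) * Gh q t 1 (s+1) F := by
  match t with
  | 0 =>
    rcases Nat.eq_zero_or_pos s with h | h
    · subst h; simp [Gh, hq]
    · simp [Gh, h.ne']
  | t+1 =>
    rw [Gh_succ_zero_ext q t s]
    simp only [Gh]
    rw [← Finset.sum_sub_distrib, Finset.mul_sum]
    apply Finset.sum_congr rfl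
    intro k _
    rw [← mul_sub, ← Gh_sub]
    have : (fun μ : ℤ => bb q (((s+1:ℕ):ℤ) - k) (μ + 2 * k - 1) * F (μ + 2 * k - 1 - 1) -
        bb q ((s:ℤ) - k) (μ + 2 * k - 1) * F (μ + 2 * k - 1 - 1)) =
        fun μ => q ^ (((s+1:ℕ):ℤ) - k) * (bb q (((s+1:ℕ):ℤ) - k) (μ + 2 * k - 2) * F (μ + 2 * k - 2)) := by
      funext μ
      have := bb_pascal q hq hq1 (((s+1:ℕ):ℤ) - k) (μ + 2 * k - 1)
      rw [show (((s+1:ℕ):ℤ) - k) - 1 = (s:ℤ) - k by push_cast; ring,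
        show μ + 2 * (k:ℤ) - 1 - 1 = μ + 2 * k - 2 by ring] at this
      rw [show μ + 2 * (k:ℤ) - 1 - 1 = μ + 2 * k - 2 by ring]
      linear_combination F (μ + 2 * k - 2) * this
    rw [this, Gh_smul, ← mul_assoc, ← mul_assoc]
    congr 1
    rw [← zpow_natCast, ← zpow_natCast, ← zpow_add₀ hq, ← zpow_add₀ hq]
    congr 1; push_cast; ring

lemma Ri_step (q : ℂ) (hq : q ≠ 0) (hq1 : ‖q‖ < 1) (t i s : ℕ) (F : ℤ → ℂ) (E : ℕ → ℂ)
    (hE0 : E 0 = 0)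
    (hE : ∀ k : ℕ, ∀ H : ℤ → ℂ, (∀ μ, H μ = bb q (((s+1:ℕ):ℤ) - (k+1:ℕ)) (μ + 2 * (k+1:ℕ) - 2) * F (μ + 2 * (k+1:ℕ) - 2)) →
      q ^ (k+1) * Gh q t (i+1) (k+1) H + E (k+1) =
        Gh q t i (k+1) (fun μ => H (μ - 1)) - Gh q t i k (fun μ => H (μ - 1)) +
          q ^ (2*k+1) * Gh q t i (k+1) (fun μ => H (μ + 1))) :
    Gh q (t+1) (i+1) (s+1) (fun μ => F (μ - 1)) - Gh q (t+1) (i+1) s (fun μ => F (μ - 1))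
      + q ^ (2*s+1) * Gh q (t+1) (i+1) (s+1) (fun μ => F (μ + 1))
      = q ^ (s+1) * Gh q (t+1) (i+2) (s+1) F
        + q ^ (s+1) * ∑ k ∈ Finset.range (s+2), q ^ ((k:ℤ)^2 - 2*k) * E k := by
  set H : ℕ → ℤ → ℂ := fun k μ => bb q (((s+1:ℕ):ℤ) - k) (μ + 2 * k - 2) * F (μ + 2 * k - 2) with hH
  set P : ℕ → ℂ := fun k => Gh q t i k (fun μ => H k (μ - 1)) with hP
  set X : ℕ → ℂ := fun k => Gh q t i k (fun μ => H k (μ + 1)) with hX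
  set Y : ℕ → ℂ := fun k => Gh q t i k (fun μ => H (k+1) (μ - 1)) with hY
  have L1 : Gh q (t+1) (i+1) (s+1) (fun μ => F (μ - 1)) - Gh q (t+1) (i+1) s (fun μ => F (μ - 1))
      = q ^ (s+1) * ∑ k ∈ Finset.range (s+2), q ^ ((k:ℤ)^2 - 2*k) * P k := by
    rw [Gh_succ_succ_ext q t i s]
    simp only [Gh]
    rw [← Finset.sum_sub_distrib, Finset.mul_sum]
    apply Finset.sum_congr rfl
    intro k _
    rw [← mul_sub, ← Gh_sub]
    have : (fun μ : ℤ => bb q (((s+1:ℕ):ℤ) - k) (μ + 2 * k - 2) * F (μ + 2 * k - 2 - 1) -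
        bb q ((s:ℤ) - k) (μ + 2 * k - 2) * F (μ + 2 * k - 2 - 1)) =
        fun μ => q ^ (((s+1:ℕ):ℤ) - k) * H k (μ - 1) := by
      funext μ
      have := bb_pascal q hq hq1 (((s+1:ℕ):ℤ) - k) (μ + 2 * k - 2)
      rw [show (((s+1:ℕ):ℤ) - k) - 1 = (s:ℤ) - k by push_cast; ring] at this
      simp only [hH]
      rw [show μ - 1 + 2 * (k:ℤ) - 2 = μ + 2 * k - 2 - 1 by ring]
      linear_combination F (μ + 2 * k - 2 - 1) * this
    rw [this, Gh_smul, ← mul_assoc, ← mul_assoc]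
    congr 1
    rw [← zpow_natCast, ← zpow_add₀ hq, ← zpow_add₀ hq]
    congr 1; push_cast; ring
  have L2 : q ^ (2*s+1) * Gh q (t+1) (i+1) (s+1) (fun μ => F (μ + 1))
      = q ^ (s+1) * ∑ k ∈ Finset.range (s+2), q ^ ((k:ℤ)^2 - 1) * (X k - Y k) := by
    simp only [Gh]
    rw [Finset.mul_sum, Finset.mul_sum]
    apply Finset.sum_congr rfl
    intro k _
    simp only [hX, hY]
    rw [← Gh_sub]
    have : (fun μ : ℤ => H k (μ + 1) - H (k+1) (μ - 1)) = fun μ => q ^ (((s+1:ℕ):ℤ) - k) *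
        (bb q (((s+1:ℕ):ℤ) - k) (μ + 2 * k - 2) * F (μ + 2 * k - 2 + 1)) := by
      funext μ
      have := bb_pascal q hq hq1 (((s+1:ℕ):ℤ) - k) (μ + 2 * k - 1)
      simp only [hH]
      rw [show μ + 1 + 2 * (k:ℤ) - 2 = μ + 2 * k - 1 by ring,
        show μ - 1 + 2 * ((k+1:ℕ):ℤ) - 2 = μ + 2 * k - 1 by push_cast; ring,
        show μ + 2 * (k:ℤ) - 2 + 1 = μ + 2 * k - 1 by ring,
        show (((s+1:ℕ):ℤ) - (k+1:ℕ)) = (((s+1:ℕ):ℤ) - k) - 1 by push_cast; ring]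
      rw [show μ + 2 * (k:ℤ) - 1 - 1 = μ + 2 * k - 2 by ring] at this
      linear_combination F (μ + 2 * k - 1) * this
    rw [this, Gh_smul, ← mul_assoc, ← mul_assoc, ← mul_assoc]
    congr 1
    rw [← zpow_natCast, ← zpow_natCast, ← zpow_add₀ hq, ← zpow_add₀ hq, ← zpow_add₀ hq]
    congr 1; push_cast; ring
  have hP0 : P 0 = 0 := Gh_zero q t i _
  have hX0 : X 0 = 0 := Gh_zero q t i _
  have hYs : Y (s+1) = 0 := by
    simp only [hY]
    have : (fun μ : ℤ => H (s+1+1) (μ - 1)) = fun _ => 0 := by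
      funext μ
      simp only [hH]
      rw [bb_neg _ _ _ (by push_cast; omega), zero_mul]
    rw [this, Gh_zero_fun]
  have Rr : ∀ k : ℕ, q ^ (((k+1:ℕ):ℤ)^2 - (k+1:ℕ)) * Gh q t (i+1) (k+1) (H (k+1))
        + q ^ (((k+1:ℕ):ℤ)^2 - 2*(k+1:ℕ)) * E (k+1) =
      q ^ (((k+1:ℕ):ℤ)^2 - 2*(k+1:ℕ)) * P (k+1) + q ^ (((k+1:ℕ):ℤ)^2 - 1) * X (k+1)
        - q ^ ((k:ℤ)^2 - 1) * Y k := by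
    intro k
    have := hE k (H (k+1)) (fun μ => rfl)
    have e1 : q ^ (((k+1:ℕ):ℤ)^2 - (k+1:ℕ)) = q ^ (((k+1:ℕ):ℤ)^2 - 2*(k+1:ℕ)) * q ^ (k+1) := by
      rw [← zpow_natCast q (k+1), ← zpow_add₀ hq]; congr 1; ring
    have e2 : q ^ (((k+1:ℕ):ℤ)^2 - 1) = q ^ (((k+1:ℕ):ℤ)^2 - 2*(k+1:ℕ)) * q ^ (2*k+1) := by
      rw [← zpow_natCast q (2*k+1), ← zpow_add₀ hq]; congr 1; push_cast; ring
    have e3 : q ^ ((k:ℤ)^2 - 1) = q ^ (((k+1:ℕ):ℤ)^2 - 2*(k+1:ℕ)) := by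
      congr 1; push_cast; ring
    rw [e1, e2, e3]
    simp only [hP, hX, hY]
    linear_combination q ^ (((k+1:ℕ):ℤ)^2 - 2*(k+1:ℕ)) * this
  rw [L1, L2]
  have R1 : Gh q (t+1) (i+2) (s+1) F = ∑ k ∈ Finset.range (s+2), q ^ ((k:ℤ)^2 - k) * Gh q t (i+1) k (H k) := rfl
  rw [R1, ← mul_add, ← mul_add]
  congr 1
  rw [← Finset.sum_add_distrib, ← Finset.sum_add_distrib]
  have A1 : ∑ k ∈ Finset.range (s+2), (q ^ ((k:ℤ)^2 - 2*k) * P k + q ^ ((k:ℤ)^2 - 1) * (X k - Y k))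
     = ∑ k ∈ Finset.range (s+2), (q ^ ((k:ℤ)^2 - 2*k) * P k + q ^ ((k:ℤ)^2 - 1) * X k)
       - ∑ k ∈ Finset.range (s+2), q ^ ((k:ℤ)^2 - 1) * Y k := by
    rw [← Finset.sum_sub_distrib]
    apply Finset.sum_congr rfl; intros; ring
  rw [A1, Finset.sum_range_succ', Finset.sum_range_succ (fun k : ℕ => q ^ ((k:ℤ)^2 - 1) * Y k),
    Finset.sum_range_succ' (fun k : ℕ => q ^ ((k:ℤ)^2 - k) * Gh q t (i+1) k (H k) + q ^ ((k:ℤ)^2 - 2*k) * E k)]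
  rw [hP0, hX0, hYs, hE0, Gh_zero]
  simp only [mul_zero, add_zero]
  rw [← Finset.sum_sub_distrib]
  apply Finset.sum_congr rfl
  intro k _
  rw [Rr k]

lemma Ri (q : ℂ) (hq : q ≠ 0) (hq1 : ‖q‖ < 1) (t : ℕ) : ∀ (i s : ℕ) (F : ℤ → ℂ), i < t →
    Gh q t (i+1) (s+1) (fun μ => F (μ - 1)) - Gh q t (i+1) s (fun μ => F (μ - 1))
      + q ^ (2*s+1) * Gh q t (i+1) (s+1) (fun μ => F (μ + 1))
      = q ^ (s+1) * Gh q t (i+2) (s+1) F + q ^ s * Gh q t i (s+1) F := by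
  induction t with
  | zero => intro i s F h; omega
  | succ t ih =>
    intro i s F h
    match i with
    | 0 =>
      rw [Ri_step q hq hq1 t 0 s F (fun k => q ^ (2*(k:ℤ)-1) * Gh q t 0 k (fun μ => bb q (((s+1:ℕ):ℤ) - k) (μ + 2 * k - 1) * F (μ + 2 * k - 1)))]
      · congr 1
        simp only [Gh]
        rw [Finset.mul_sum, Finset.mul_sum]
        apply Finset.sum_congr rfl
        intro k _
        rw [← mul_assoc, ← mul_assoc, ← mul_assoc]
        congr 1
        simp only [← zpow_natCast, ← zpow_add₀ hq]
        congr 1; push_cast; ring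
      · simp [Gh_zero]
      · intro k H hH
        have := R0 q hq hq1 t k H
        rw [this]
        congr 1
        congr 1
        · rw [← zpow_natCast]; congr 1; push_cast; ring
        · congr 1; funext μ; rw [hH]
          rw [show μ + 1 + 2 * ((k+1:ℕ):ℤ) - 2 = μ + 2 * ((k+1:ℕ):ℤ) - 1 by ring]
    | i+1 =>
      rw [Ri_step q hq hq1 t (i+1) s F (fun k => q ^ ((k:ℤ)-1) * Gh q t i k (fun μ => bb q (((s+1:ℕ):ℤ) - k) (μ + 2 * k - 2) * F (μ + 2 * k - 2)))]
      · congr 1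
        simp only [Gh]
        rw [Finset.mul_sum, Finset.mul_sum]
        apply Finset.sum_congr rfl
        intro k _
        rw [← mul_assoc, ← mul_assoc, ← mul_assoc]
        congr 1
        simp only [← zpow_natCast, ← zpow_add₀ hq]
        congr 1; push_cast; ring
      · simp [Gh_zero]
      · intro k H hH
        have := ih i k H (by omega)
        rw [this]
        congr 1
        congr 1
        · rw [← zpow_natCast]; congr 1; push_cast; ring
        · congr 1; funext μ; rw [hH]

lemma bb_neg_one (q : ℂ) (d : ℕ) : bb q d (-1) = if d = 0 then 1 else 0 := by
  rw [bb, if_neg (by omega)]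
  match d with
  | 0 => simp
  | d+1 =>
    rw [if_neg (by omega)]
    apply Finset.prod_eq_zero (i := 0) <;> simp

lemma Gh_last (q : ℂ) (t : ℕ) : ∀ (s : ℕ) (F : ℤ → ℂ),
    Gh q t (t+1) s F = if s = 1 then q⁻¹ * F (-1) else 0 := by
  induction t with
  | zero => intro s F; simp [Gh]
  | succ t ih =>
    intro s F
    simp only [Gh, ih]
    match s with
    | 0 => simp
    | s+1 =>
      rw [Finset.sum_eq_single 1]
      · have := bb_neg_one q s
        simp only [if_true]
        rw [show (((s+1:ℕ):ℤ) - (1:ℕ)) = s by push_cast; ring,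
          show (-1 + 2 * ((1:ℕ):ℤ) - 2) = -1 by norm_num, this]
        rcases Nat.eq_zero_or_pos s with h | h
        · subst h; simp
        · simp [h.ne']
      · intro b _ hb; simp [hb]
      · simp

noncomputable def cc (q : ℂ) (t : ℕ) (k : ℤ) : ℂ :=
  (-1 : ℂ) ^ k * q ^ (-(2 * (t : ℤ) + 3) * k * (k + 1) / 2 + k)

noncomputable def AA (q : ℂ) (t l : ℕ) : ℂ :=
  ∑ k ∈ Finset.Icc (-(l : ℤ)) ((l : ℤ) - 1), cc q t k

noncomputable def bl (q : ℂ) (t l : ℕ) : ℂ := q ^ ((t+2) * l^2) * AA q t l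

noncomputable def ut (q : ℂ) (M s : ℕ) : ℂ := rr q ((s:ℤ) - M - 1) * rr q ((s:ℤ) + M)

noncomputable def pp (q : ℂ) (t i M : ℕ) : ℂ :=
  bl q t (M+1) * q ^ (-((M:ℤ)+1) * i) - bl q t M * q ^ ((M:ℤ) * i)

noncomputable def Lh (q : ℂ) (t i s : ℕ) : ℂ := -∑ M ∈ Finset.range s, pp q t (i+1) M * ut q M s

lemma AA_zero (q : ℂ) (t : ℕ) : AA q t 0 = 0 := by simp [AA]

lemma AA_succ (q : ℂ) (t l : ℕ) : AA q t (l+1) = AA q t l + cc q t l + cc q t (-(l:ℤ)-1) := by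
  have h : Finset.Icc (-((l+1:ℕ) : ℤ)) (((l+1:ℕ) : ℤ) - 1) =
      insert (l:ℤ) (insert (-(l:ℤ)-1) (Finset.Icc (-(l : ℤ)) ((l : ℤ) - 1))) := by
    ext x; simp only [Finset.mem_Icc, Finset.mem_insert]; push_cast; omega
  rw [AA, h, Finset.sum_insert, Finset.sum_insert, AA]
  · ring
  · simp
  · simp only [Finset.mem_Icc, Finset.mem_insert]; omega

lemma ut_zero (q : ℂ) (M s : ℕ) (h : s ≤ M) : ut q M s = 0 := by
  rw [ut, rr, if_pos (by omega), zero_mul]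

lemma ut_pred (q : ℂ) (hq : q ≠ 0) (hq1 : ‖q‖ < 1) (M s : ℕ) :
    ut q M s = (1 + q ^ (2*s+1) - q ^ (s+1) * (q ^ (M:ℤ) + q ^ (-(M:ℤ)-1))) * ut q M (s+1) := by
  have h1 := rr_pred q hq1 ((s:ℤ) - M)
  have h2 := rr_pred q hq1 ((s:ℤ) + M + 1)
  rw [show (s:ℤ) + M + 1 - 1 = s + M by ring] at h2
  rw [ut, ut, h1, h2, show ((s+1:ℕ):ℤ) - M - 1 = s - M by push_cast; ring,
    show ((s+1:ℕ):ℤ) + M = s + M + 1 by push_cast; ring]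
  have e1 : q ^ ((s:ℤ) - M) = q ^ (s+1) * q ^ (-(M:ℤ)-1) := by
    rw [← zpow_natCast, ← zpow_add₀ hq]; congr 1; push_cast; ring
  have e2 : q ^ ((s:ℤ) + M + 1) = q ^ (s+1) * q ^ (M:ℤ) := by
    rw [← zpow_natCast, ← zpow_add₀ hq]; congr 1; push_cast; ring
  have e3 : q ^ (2*s+1) = q ^ ((s:ℤ) - M) * q ^ ((s:ℤ) + M + 1) := by
    rw [← zpow_natCast, ← zpow_add₀ hq]; congr 1; push_cast; ring
  rw [e3, e1, e2]
  ring

lemma pp_rec (q : ℂ) (hq : q ≠ 0) (t i M : ℕ) :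
    pp q t (i+2) M = (q ^ (M:ℤ) + q ^ (-(M:ℤ)-1)) * pp q t (i+1) M - q⁻¹ * pp q t i M := by
  simp only [pp]
  have a1 : q ^ (-((M:ℤ)+1) * ((i+1:ℕ):ℤ)) = q ^ (-((M:ℤ)+1) * (i:ℤ)) * q ^ (-(M:ℤ)-1) := by
    rw [← zpow_add₀ hq]; congr 1 <;> (try push_cast) <;> (try ring)
  have a2 : q ^ (-((M:ℤ)+1) * ((i+2:ℕ):ℤ)) = q ^ (-((M:ℤ)+1) * (i:ℤ)) * q ^ (-(M:ℤ)-1) * q ^ (-(M:ℤ)-1) := by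
    rw [← zpow_add₀ hq, ← zpow_add₀ hq]; congr 1 <;> (try push_cast) <;> (try ring)
  have a3 : q ^ ((M:ℤ) * ((i+1:ℕ):ℤ)) = q ^ ((M:ℤ) * (i:ℤ)) * q ^ (M:ℤ) := by
    rw [← zpow_add₀ hq]; congr 1 <;> (try push_cast) <;> (try ring)
  have a4 : q ^ ((M:ℤ) * ((i+2:ℕ):ℤ)) = q ^ ((M:ℤ) * (i:ℤ)) * q ^ (M:ℤ) * q ^ (M:ℤ) := by
    rw [← zpow_add₀ hq, ← zpow_add₀ hq]; congr 1 <;> (try push_cast) <;> (try ring)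
  have a5 : q⁻¹ = q ^ (M:ℤ) * q ^ (-(M:ℤ)-1) := by
    rw [← zpow_add₀ hq, ← zpow_neg_one]; congr 1; ring
  rw [a1, a2, a3, a4, a5]
  ring

/-- general three term recurrence -/
lemma Lh_gen (q : ℂ) (hq : q ≠ 0) (hq1 : ‖q‖ < 1) (t i s : ℕ) :
    Lh q t i (s+1) - Lh q t i s + q ^ (2*s+1) * Lh q t i (s+1) =
      q ^ (s+1) * Lh q t (i+1) (s+1) +
        q ^ s * (-∑ M ∈ Finset.range (s+1), pp q t i M * ut q M (s+1)) := by
  have h : Lh q t i s = -∑ M ∈ Finset.range (s+1), pp q t (i+1) M * ut q M s := by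
    rw [Finset.sum_range_succ, ut_zero q s s le_rfl, mul_zero, add_zero, Lh]
  rw [h]
  simp only [Lh]
  simp only [← Finset.sum_neg_distrib, Finset.mul_sum]
  rw [← Finset.sum_sub_distrib, ← Finset.sum_add_distrib, ← Finset.sum_add_distrib]
  apply Finset.sum_congr rfl
  intro M _
  rw [ut_pred q hq hq1 M s, pp_rec q hq]
  have : q ^ (s+1) * q⁻¹ = q ^ s := by rw [pow_succ]; field_simp
  linear_combination (-pp q t i M * ut q M (s+1)) * this

lemma pp_zero_sum (q : ℂ) (hq : q ≠ 0) (hq1 : ‖q‖ < 1) (t s : ℕ) :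
    ∑ M ∈ Finset.range s, pp q t 0 M * ut q M s =
      q ^ s * ∑ M ∈ Finset.range s, pp q t 1 M * ut q M s := by
  set f : ℕ → ℂ := fun M => bl q t M * rr q ((s:ℤ) - M - 1) * rr q ((s:ℤ) + M - 1) with hf
  have key : ∀ M, pp q t 0 M * ut q M s - q ^ s * (pp q t 1 M * ut q M s) = f (M+1) - f M := by
    intro M
    simp only [hf, pp, ut]
    have h1 := rr_pred q hq1 ((s:ℤ) - M - 1)
    have h2 := rr_pred q hq1 ((s:ℤ) + M)
    rw [show (s:ℤ) - (M+1:ℕ) - 1 = s - M - 1 - 1 by push_cast; ring,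
      show (s:ℤ) + (M+1:ℕ) - 1 = s + M by push_cast; ring, h1, h2]
    have e1 : q ^ ((s:ℤ) - M - 1) = q ^ s * q ^ (-((M:ℤ)+1) * ((1:ℕ):ℤ)) := by
      rw [← zpow_natCast, ← zpow_add₀ hq]; congr 1; push_cast; ring
    have e2 : q ^ ((s:ℤ) + M) = q ^ s * q ^ ((M:ℤ) * ((1:ℕ):ℤ)) := by
      rw [← zpow_natCast, ← zpow_add₀ hq]; congr 1; push_cast; ring
    rw [e1, e2]
    simp only [Nat.cast_zero, mul_zero, zpow_zero]
    ring
  have h3 : ∑ M ∈ Finset.range s, (f (M+1) - f M) = 0 := by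
    rw [Finset.sum_range_sub]
    simp only [hf]
    rw [show (s:ℤ) - s - 1 = -1 by ring]
    simp [bl, AA_zero, rr]
  rw [Finset.mul_sum, ← sub_eq_zero, ← Finset.sum_sub_distrib, ← h3]
  exact Finset.sum_congr rfl fun M _ => key M

lemma Lh_R0 (q : ℂ) (hq : q ≠ 0) (hq1 : ‖q‖ < 1) (t s : ℕ) :
    Lh q t 0 (s+1) - Lh q t 0 s = q ^ (s+1) * Lh q t 1 (s+1) := by
  have h := Lh_gen q hq hq1 t 0 s
  rw [pp_zero_sum q hq hq1] at h
  have h2 : Lh q t 0 (s+1) = -∑ M ∈ Finset.range (s+1), pp q t 1 M * ut q M (s+1) := rfl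
  rw [Nat.zero_add] at h
  have e : q ^ (2*s+1) = q ^ s * q ^ (s+1) := by ring
  rw [e] at h
  linear_combination h - q ^ s * q ^ (s+1) * h2

lemma Lh_Ri (q : ℂ) (hq : q ≠ 0) (hq1 : ‖q‖ < 1) (t i s : ℕ) :
    Lh q t (i+1) (s+1) - Lh q t (i+1) s + q ^ (2*s+1) * Lh q t (i+1) (s+1) =
      q ^ (s+1) * Lh q t (i+2) (s+1) + q ^ s * Lh q t i (s+1) :=
  Lh_gen q hq hq1 t (i+1) s

lemma pp_last (q : ℂ) (hq : q ≠ 0) (t M : ℕ) :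
    pp q t (t+2) M = (-1) ^ M * q ^ (M * (M+1) / 2) * (q ^ M - q ^ (-(M:ℤ)-1)) := by
  obtain ⟨h, hh⟩ : ∃ h : ℕ, M * (M+1) = 2 * h := (Nat.even_mul_succ_self M).two_dvd
  have hz : (M:ℤ) * (M+1) = 2 * h := by exact_mod_cast hh
  have hd : M * (M+1) / 2 = h := by omega
  rw [hd, pp, bl, bl, AA_succ]
  have c1 : cc q t M = (-1) ^ M * q ^ (-(2*(t:ℤ)+3) * h) * q ^ M := by
    rw [cc, zpow_natCast]
    have : -(2 * (t : ℤ) + 3) * M * (M + 1) / 2 = -(2*(t:ℤ)+3) * h := by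
      rw [mul_assoc, hz, show -(2 * (t : ℤ) + 3) * (2 * h) = 2 * (-(2*(t:ℤ)+3) * h) by ring]
      simp
    rw [this, zpow_add₀ hq, zpow_natCast]; ring
  have c2 : cc q t (-(M:ℤ)-1) = -((-1) ^ M * q ^ (-(2*(t:ℤ)+3) * h) * q ^ (-(M:ℤ)-1)) := by
    rw [cc]
    have : -(2 * (t : ℤ) + 3) * (-(M:ℤ)-1) * (-(M:ℤ)-1 + 1) / 2 = -(2*(t:ℤ)+3) * h := by
      rw [mul_assoc, show (-(M:ℤ)-1) * (-(M:ℤ)-1+1) = M * (M+1) by ring, hz,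
        show -(2 * (t : ℤ) + 3) * (2 * h) = 2 * (-(2*(t:ℤ)+3) * h) by ring]
      simp
    have s1 : (-1 : ℂ) ^ (-(M:ℤ)-1) = - (-1) ^ M := by
      rw [zpow_sub₀ (by norm_num), zpow_neg, zpow_natCast, zpow_one]
      rcases neg_one_pow_eq_or ℂ M with h | h <;> rw [h] <;> norm_num
    rw [this, zpow_add₀ hq, s1]; ring
  have e1 : q ^ ((t+2) * (M+1)^2) * q ^ (-((M:ℤ)+1) * ((t+2:ℕ):ℤ)) = q ^ (2 * ((t:ℤ)+2) * h) := by
    rw [← zpow_natCast, ← zpow_add₀ hq]; congr 1; push_cast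
    linear_combination ((t:ℤ)+2) * hz
  have e2 : q ^ ((t+2) * M^2) * q ^ ((M:ℤ) * ((t+2:ℕ):ℤ)) = q ^ (2 * ((t:ℤ)+2) * h) := by
    rw [← zpow_natCast, ← zpow_add₀ hq]; congr 1; push_cast
    linear_combination ((t:ℤ)+2) * hz
  have e3 : q ^ h = q ^ (2 * ((t:ℤ)+2) * h) * q ^ (-(2*(t:ℤ)+3) * h) := by
    rw [← zpow_natCast, ← zpow_add₀ hq]; congr 1; ring
  rw [c1, c2, e3]
  linear_combination (AA q t M + (-1) ^ M * q ^ (-(2*(t:ℤ)+3) * h) * q ^ M + -((-1) ^ M * q ^ (-(2*(t:ℤ)+3) * h) * q ^ (-(M:ℤ)-1))) * e1 - AA q t M * e2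

lemma Lh_last (q : ℂ) (hq : q ≠ 0) (hq1 : ‖q‖ < 1) (t s : ℕ) :
    Lh q t (t+1) s = if s = 1 then q⁻¹ else 0 := by
  rw [Lh]
  simp only [pp_last q hq]
  match s with
  | 0 => simp
  | 1 =>
    have := one_sub_ne q hq1 0
    simp only [zero_add, pow_one] at this
    simp [ut, rr, qPoch]
    field_simp
    ring
  | s+2 =>
    rw [if_neg (by omega), neg_eq_zero]
    have hs := one_sub_ne q hq1 s
    set R : ℕ → ℂ := fun M => (-1) ^ M * q ^ (M * (M-1) / 2) * (q ^ M - 1) *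
      rr q (((s+2:ℕ):ℤ) - M - 1) * rr q (((s+2:ℕ):ℤ) + M - 1) with hR
    have key : ∀ M : ℕ, ((-1) ^ M * q ^ (M * (M+1) / 2) * (q ^ M - q ^ (-(M:ℤ)-1)) * ut q M (s+2))
        * (q * (1 - q ^ (s+1))) = - (R (M+1) - R M) := by
      intro M
      obtain ⟨h, hh⟩ : ∃ h : ℕ, M * (M-1) = 2 * h := by
        obtain ⟨h, hh⟩ := (Nat.even_mul_pred_self M).two_dvd
        exact ⟨h, hh⟩
      have hM : M * (M+1) = 2 * (h + M) := by
        rcases M with _ | M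
        · simp at hh ⊢; omega
        · simp only [Nat.add_sub_cancel] at hh; linarith
      simp only [hR, ut]
      have h1 := rr_pred q hq1 (((s+2:ℕ):ℤ) - M - 1)
      have h2 := rr_pred q hq1 (((s+2:ℕ):ℤ) + M)
      have d1 : M * (M-1) / 2 = h := by omega
      have d2 : M * (M+1) / 2 = h + M := by omega
      have d3 : (M+1) * (M+1-1) / 2 = h + M := by
        rw [Nat.add_sub_cancel, Nat.mul_comm]; exact d2
      rw [d1, d2, d3, show ((s+2:ℕ):ℤ) - (M+1:ℕ) - 1 = (s+2:ℕ) - M - 1 - 1 by push_cast; ring,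
        show ((s+2:ℕ):ℤ) + (M+1:ℕ) - 1 = (s+2:ℕ) + M by push_cast; ring, h1, h2]
      have e1 : q ^ (((s+2:ℕ):ℤ) - M - 1) = q ^ (s+1) * (q ^ M)⁻¹ := by
        rw [← zpow_natCast, ← zpow_natCast, ← zpow_neg, ← zpow_add₀ hq]; congr 1; push_cast; ring
      have e2 : q ^ (((s+2:ℕ):ℤ) + M) = q ^ (s+2) * q ^ M := by
        rw [← zpow_natCast q (s+2), ← zpow_natCast q M, ← zpow_add₀ hq]
      have e3 : q ^ (-(M:ℤ)-1) = (q ^ M)⁻¹ * q⁻¹ := by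
        rw [← zpow_natCast, ← zpow_neg, ← zpow_neg_one, ← zpow_add₀ hq]; congr 1
      rw [e1, e2, e3]
      have hqM : q ^ M ≠ 0 := pow_ne_zero _ hq
      rw [pow_add q h M, pow_succ (-1 : ℂ), pow_succ q M, pow_succ q (s+1)]
      generalize q ^ M = x at *
      generalize q ^ (s+1) = y at *
      field_simp
      ring
    have hsum : (∑ M ∈ Finset.range (s+2), (-1) ^ M * q ^ (M * (M+1) / 2) * (q ^ M - q ^ (-(M:ℤ)-1)) * ut q M (s+2))
        * (q * (1 - q ^ (s+1))) = 0 := by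
      rw [Finset.sum_mul, Finset.sum_congr rfl (fun M _ => key M), Finset.sum_neg_distrib,
        Finset.sum_range_sub]
      simp only [hR]
      rw [show ((s+2:ℕ):ℤ) - (s+2:ℕ) - 1 = -1 by ring]
      simp [rr]
    rcases mul_eq_zero.mp hsum with h | h
    · exact h
    · exact absurd h (mul_ne_zero hq hs)

lemma Gh_eq_Lh (q : ℂ) (hq : q ≠ 0) (hq1 : ‖q‖ < 1) (t s : ℕ) :
    ∀ i ≤ t + 1, Gh q t i s (fun _ => 1) = Lh q t i s := by
  induction s with
  | zero => intro i _; rw [Gh_zero]; simp [Lh]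
  | succ s ih =>
    set x := Gh q t 0 (s+1) (fun _ => 1) - Lh q t 0 (s+1) with hx
    set D : ℕ → ℂ := fun i => Gh q t i (s+1) (fun _ => 1) - Lh q t i (s+1) with hD
    have step : ∀ i, i ≤ t → (q ^ (s+1)) ^ i * D i = x ∧ (q ^ (s+1)) ^ (i+1) * D (i+1) = x := by
      intro i
      induction i with
      | zero =>
        intro _
        have a := R0 q hq hq1 t s (fun _ => 1)
        have b := Lh_R0 q hq hq1 t s
        have c := ih 0 (by omega)
        refine ⟨by simp [hD, hx], ?_⟩
        simp only [hD, hx]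
        rw [zero_add, pow_one]
        linear_combination b - a - c
      | succ i ihi =>
        intro hi
        obtain ⟨y1, y2⟩ := ihi (by omega)
        refine ⟨y2, ?_⟩
        have a := Ri q hq hq1 t i s (fun _ => 1) (by omega)
        have b := Lh_Ri q hq hq1 t i s
        have c := ih (i+1) (by omega)
        have z : q ^ (s+1) * D (i+2) = (1 + q ^ (2*s+1)) * D (i+1) - q ^ s * D i := by
          simp only [hD]
          linear_combination b - a - c
        have e : (q ^ (s+1)) ^ (i+1+1) * D (i+1+1) = (q ^ (s+1)) ^ (i+1) * (q ^ (s+1) * D (i+2)) := by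
          ring
        rw [e, z]
        have e2 : q ^ (2*s+1) = q ^ s * q ^ (s+1) := by ring
        rw [e2]
        linear_combination (1 + q ^ s * q ^ (s+1)) * y2 - q ^ s * q ^ (s+1) * y1
    have hx0 : x = 0 := by
      rw [← (step t le_rfl).2]
      simp only [hD]
      rw [Gh_last, Lh_last q hq hq1]
      simp
    have hq' : q ^ (s+1) ≠ 0 := pow_ne_zero _ hq
    intro i hi
    have : (q ^ (s+1)) ^ i * D i = x := by
      rcases Nat.lt_or_ge i (t+1) with h | h
      · exact (step i (by omega)).1
      · rw [show i = t+1 by omega]; exact (step t le_rfl).2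
    rw [hx0] at this
    rcases mul_eq_zero.mp this with h | h
    · exact absurd h (pow_ne_zero _ hq')
    · exact sub_eq_zero.mp h

lemma lhs_eq (q : ℂ) (hq : q ≠ 0) (hq1 : ‖q‖ < 1) (t n : ℕ) :
    -(∑ l ∈ Finset.range (n + 2),
      q ^ ((t + 2) * l ^ 2 - l) * (1 - q ^ (2 * l)) /
          (qPoch q q (n + 1 - l) * qPoch q q (n + 1 + l)) * AA q t l) = Lh q t 0 (n+1) := by
  rw [Lh]
  congr 1
  have hs : ∀ l ∈ Finset.range (n+2), q ^ ((t + 2) * l ^ 2 - l) * (1 - q ^ (2 * l)) /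
          (qPoch q q (n + 1 - l) * qPoch q q (n + 1 + l)) * AA q t l =
      bl q t l * q ^ (-(l:ℤ)) * (rr q ((n:ℤ)+1-l) * rr q ((n:ℤ)+1+l-1)) -
       bl q t l * q ^ l * ut q l (n+1) := by
    intro l hl
    have hl' : l ≤ n + 1 := by have := Finset.mem_range.mp hl; omega
    have r1 : rr q ((n:ℤ)+1-l) = (qPoch q q (n+1-l))⁻¹ := by
      rw [rr, if_neg (by omega)]; congr 2; omega
    have r2 : rr q ((n:ℤ)+1+l) = (qPoch q q (n+1+l))⁻¹ := by
      rw [rr, if_neg (by omega)]; congr 2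
    have h1 := rr_pred q hq1 ((n:ℤ)+1-l)
    have h2 := rr_pred q hq1 ((n:ℤ)+1+l)
    rw [ut, show ((n+1:ℕ):ℤ) - l - 1 = n + 1 - l - 1 by push_cast; ring,
      show ((n+1:ℕ):ℤ) + l = n + 1 + l by push_cast; ring, h1, h2, div_eq_mul_inv, mul_inv,
      ← r1, ← r2, bl]
    have hle : l ≤ (t+2) * l^2 := by nlinarith [sq_nonneg (l:ℤ), Nat.le_self_pow (n := 2) (by norm_num) l]
    have e1 : q ^ ((t+2) * l^2) = q ^ ((t+2) * l^2 - l) * q ^ l := by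
      rw [← pow_add, Nat.sub_add_cancel hle]
    have e2 : q ^ ((n:ℤ)+1+l) = q ^ (n+1) * q ^ l := by
      rw [← zpow_natCast, ← zpow_natCast, ← zpow_add₀ hq]; congr 1
    have e3 : q ^ ((n:ℤ)+1-l) = q ^ (n+1) * (q ^ l)⁻¹ := by
      rw [← zpow_natCast, ← zpow_natCast, ← zpow_neg, ← zpow_add₀ hq]; congr 1
    have e4 : q ^ (-(l:ℤ)) = (q ^ l)⁻¹ := by rw [zpow_neg, zpow_natCast]
    rw [e1, e2, e3, e4, mul_comm 2 l, pow_mul]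
    have : q ^ l ≠ 0 := pow_ne_zero _ hq
    field_simp
    ring
  rw [Finset.sum_congr rfl hs, Finset.sum_sub_distrib, Finset.sum_range_succ',
    Finset.sum_range_succ (fun l => bl q t l * q ^ l * ut q l (n+1)), ut_zero q (n+1) (n+1) le_rfl]
  have b0 : bl q t 0 = 0 := by simp [bl, AA_zero]
  rw [b0]
  simp only [zero_mul, mul_zero, add_zero]
  rw [← Finset.sum_sub_distrib]
  apply Finset.sum_congr rfl
  intro M _
  rw [pp, ut, show ((n+1:ℕ):ℤ) - M - 1 = n + 1 - (M+1:ℕ) by push_cast; ring,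
      show ((n+1:ℕ):ℤ) + M = n + 1 + (M+1:ℕ) - 1 by push_cast; ring,
      show -((M:ℤ)+1) * ((0+1:ℕ):ℤ) = -((M+1:ℕ):ℤ) by push_cast; ring,
      show (M:ℤ) * ((0+1:ℕ):ℤ) = M by push_cast; ring, zpow_natCast]
  ring

lemma UtProd_succ (q : ℂ) (t : ℕ) (K : Fin (t+2) → ℕ) :
    UtProd q (t+1) K = UtProd q t (fun i => K i.castSucc) *
      (q ^ (K (Fin.last t).castSucc ^ 2) *
        qBinom q ((K (Fin.last (t+1)) : ℤ) - K (Fin.last t).castSucc +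
            ((∑ j : Fin t, (2 * (K j.castSucc.castSucc : ℤ) - 1)) + 2 * K (Fin.last t).castSucc - 1))
          ((K (Fin.last (t+1)) : ℤ) - K (Fin.last t).castSucc)) := by
  rw [UtProd, Fin.prod_univ_castSucc, UtProd]
  congr 1
  · apply Finset.prod_congr rfl
    intro i _
    have : ∑ j ∈ Finset.univ.filter (fun j : Fin (t+1+1) => (j : ℕ) < ((i.castSucc : Fin (t+1)) : ℕ)), (K j : ℤ)
      = ∑ j ∈ Finset.univ.filter (fun j : Fin (t+1) => (j : ℕ) < (i : ℕ)), (K j.castSucc : ℤ) := by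
      rw [Finset.sum_filter, Fin.sum_univ_castSucc, Finset.sum_filter]
      have := i.2
      rw [if_neg (by simp; omega), add_zero]
      rfl
    rw [this]
    rfl
  · congr 2
    have : ∑ j ∈ Finset.univ.filter (fun j : Fin (t+1+1) => (j : ℕ) < ((Fin.last t : Fin (t+1)) : ℕ)), (K j : ℤ)
      = ∑ j : Fin t, (K j.castSucc.castSucc : ℤ) := by
      rw [Finset.sum_filter, Fin.sum_univ_castSucc, Fin.sum_univ_castSucc]
      simp
    rw [this, Finset.sum_sub_distrib, ← Finset.mul_sum]
    simp
    ring

lemma qBinom_eq (q : ℂ) (d μ : ℤ) (hd : 0 ≤ d) (hμ : 0 ≤ μ) : qBinom q (d + μ) d = bb q d μ := by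
  rw [qBinom, if_pos ⟨hd, by omega⟩, bb, if_neg (by omega)]
  apply Finset.prod_congr rfl
  intro j _
  rw [show d + μ - d = μ by ring]

lemma multi (q : ℂ) (B t : ℕ) : ∀ (s : ℕ), s < B + 1 → ∀ F : ℤ → ℂ,
    ∑ k ∈ Finset.univ.filter
        (fun k : Fin (t+1) → Fin (B + 1) =>
          (∀ i : Fin t, k i.castSucc ≤ k i.succ) ∧
          (k (Fin.last t) : ℕ) = s ∧ 1 ≤ (k 0 : ℕ)),
      UtProd q t (fun i => (k i : ℕ)) * F (∑ j : Fin t, (2 * ((k j.castSucc : ℕ) : ℤ) - 1))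
    = Gh q t 0 s F := by
  induction t with
  | zero =>
    intro s hs F
    rcases Nat.eq_zero_or_pos s with h | h
    · subst h
      rw [Gh_zero]
      apply Finset.sum_eq_zero
      intro k hk
      simp only [Finset.mem_filter] at hk
      have h1 := hk.2.2.1
      have h2 := hk.2.2.2
      have : (Fin.last 0 : Fin 1) = 0 := rfl
      rw [this] at h1
      omega
    · rw [Finset.sum_eq_single (fun _ => (⟨s, hs⟩ : Fin (B+1)))]
      · simp [UtProd, Gh, h.ne']
      · intro k hk hne
        exfalso
        apply hne
        funext i
        simp only [Finset.mem_filter] at hk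
        have h1 := hk.2.2.1
        rw [show i = Fin.last 0 from Fin.ext (by have := i.2; simp)]
        exact Fin.ext h1
      · intro hk
        exfalso
        apply hk
        simp
        omega
  | succ t ih =>
    intro s hs F
    have step1 : ∑ k ∈ Finset.univ.filter
        (fun k : Fin (t+1+1) → Fin (B + 1) =>
          (∀ i : Fin (t+1), k i.castSucc ≤ k i.succ) ∧
          (k (Fin.last (t+1)) : ℕ) = s ∧ 1 ≤ (k 0 : ℕ)),
        UtProd q (t+1) (fun i => (k i : ℕ)) * F (∑ j : Fin (t+1), (2 * ((k j.castSucc : ℕ) : ℤ) - 1))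
      = ∑ k ∈ Finset.univ.filter
        (fun k : Fin (t+1) → Fin (B + 1) =>
          (∀ i : Fin t, k i.castSucc ≤ k i.succ) ∧
          (k (Fin.last t) : ℕ) ≤ s ∧ 1 ≤ (k 0 : ℕ)),
        UtProd q t (fun i => (k i : ℕ)) * (q ^ ((k (Fin.last t) : ℕ) ^ 2) *
          (bb q ((s:ℤ) - (k (Fin.last t) : ℕ)) (∑ j : Fin t, (2 * ((k j.castSucc : ℕ) : ℤ) - 1) + 2 * (k (Fin.last t) : ℕ) - 1)
            * F (∑ j : Fin t, (2 * ((k j.castSucc : ℕ) : ℤ) - 1) + 2 * (k (Fin.last t) : ℕ) - 1))) := by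
      apply Finset.sum_bij' (fun k _ => fun i : Fin (t+1) => k i.castSucc)
        (fun k _ => (Fin.snoc k (⟨s, hs⟩ : Fin (B+1)) : Fin (t+1+1) → Fin (B+1)))
      · intro k hk
        simp only [Finset.mem_filter, Finset.mem_univ, true_and] at hk ⊢
        obtain ⟨h1, h2, h3⟩ := hk
        refine ⟨fun i => h1 i.castSucc, ?_, h3⟩
        have := h1 (Fin.last t)
        rw [Fin.succ_last] at this
        have := Fin.le_def.mp this
        exact le_of_le_of_eq this h2
      · intro k hk
        simp only [Finset.mem_filter, Finset.mem_univ, true_and] at hk ⊢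
        obtain ⟨h1, h2, h3⟩ := hk
        refine ⟨?_, by simp, ?_⟩
        · intro i
          refine Fin.lastCases ?_ (fun i => ?_) i
          · rw [Fin.succ_last, Fin.snoc_last, Fin.snoc_castSucc]
            exact Fin.le_def.mpr h2
          · rw [Fin.succ_castSucc, Fin.snoc_castSucc, Fin.snoc_castSucc]
            exact h1 i
        · rw [← Fin.castSucc_zero, Fin.snoc_castSucc]; exact h3
      · intro k hk
        simp only [Finset.mem_filter, Finset.mem_univ, true_and] at hk
        funext i
        refine Fin.lastCases ?_ (fun i => ?_) i
        · rw [Fin.snoc_last]; exact Fin.ext hk.2.1.symm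
        · rw [Fin.snoc_castSucc]
      · intro k hk
        funext i
        rw [Fin.snoc_castSucc]
      · intro k hk
        simp only [Finset.mem_filter, Finset.mem_univ, true_and] at hk
        obtain ⟨h1, h2, h3⟩ := hk
        have hmono : Monotone k := Fin.monotone_iff_le_succ.mpr h1
        have hpos : ∀ i, 1 ≤ (k i : ℕ) := fun i =>
          le_trans h3 (Fin.le_def.mp (hmono (Fin.zero_le i)))
        have hμ : 0 ≤ ∑ j : Fin t, (2 * ((k j.castSucc.castSucc : ℕ) : ℤ) - 1) :=
          Finset.sum_nonneg fun j _ => by have := hpos j.castSucc.castSucc; omega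
        have hle : (k (Fin.last t).castSucc : ℕ) ≤ s := by
          rw [← h2]; exact Fin.le_def.mp (hmono (Fin.le_last _))
        have hp := hpos (Fin.last t).castSucc
        rw [UtProd_succ, qBinom_eq _ _ _ (by omega) (by omega), Fin.sum_univ_castSucc, h2]
        rw [← add_sub_assoc]
        ring
    rw [step1]
    rw [← Finset.sum_fiberwise_of_maps_to (s := Finset.univ.filter
        (fun k : Fin (t+1) → Fin (B + 1) =>
          (∀ i : Fin t, k i.castSucc ≤ k i.succ) ∧
          (k (Fin.last t) : ℕ) ≤ s ∧ 1 ≤ (k 0 : ℕ))) (t := Finset.range (s+1))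
        (g := fun k => (k (Fin.last t) : ℕ))
        (fun k hk => by
          simp only [Finset.mem_filter] at hk
          exact Finset.mem_range.mpr (by have := hk.2.2.1; omega))]
    simp only [Gh]
    apply Finset.sum_congr rfl
    intro m hm
    have hm' : m ≤ s := by have := Finset.mem_range.mp hm; omega
    rw [← ih m (by omega), Finset.mul_sum, Finset.filter_filter]
    apply Finset.sum_congr
    · ext k
      simp only [Finset.mem_filter, Finset.mem_univ, true_and]
      constructor
      · rintro ⟨⟨h1, h2, h3⟩, h4⟩; exact ⟨h1, h4, h3⟩
      · rintro ⟨h1, h4, h3⟩; exact ⟨⟨h1, by omega, h3⟩, h4⟩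
    · intro k hk
      simp only [Finset.mem_filter, Finset.mem_univ, true_and] at hk
      rw [hk.2.1]
      ring

/-- the cyclotomic coefficient of the left-handed torus knot as a
positive multisum: `-q^{t-n-1} C_n(T*_{(2,2t+1)};q)` (defining sum on the left) equals
the multisum over tuples `n+1 = k_t ≥ … ≥ k_1 ≥ 1` of
`Π_i q^{k_i²}·[k_{i+1}+k_i-i+2Σ_{j<i}k_j choose k_{i+1}-k_i]_q`.
Here the paper's `t` is `t+1`. -/
theorem stmt4 (t n : ℕ) (q : ℂ)
    (hq0 : 0 < ‖q‖) (hq1 : ‖q‖ < 1) :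
    -(∑ l ∈ Finset.range (n + 2),
      q ^ ((t + 2) * l ^ 2 - l) * (1 - q ^ (2 * l)) /
          (qPoch q q (n + 1 - l) * qPoch q q (n + 1 + l)) *
        ∑ k ∈ Finset.Icc (-(l : ℤ)) ((l : ℤ) - 1),
          (-1 : ℂ) ^ k * q ^ (-(2 * (t : ℤ) + 3) * k * (k + 1) / 2 + k)) =
    ∑ k ∈ Finset.univ.filter
        (fun k : Fin (t+1) → Fin (n+2) =>
          (∀ i : Fin t, k i.castSucc ≤ k i.succ) ∧
          (k (Fin.last t) : ℕ) = n + 1 ∧ 1 ≤ (k 0 : ℕ)),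
      UtProd q t (fun i => (k i : ℕ)) := by

  have hq : q ≠ 0 := norm_pos_iff.mp hq0
  have h1 := lhs_eq q hq hq1 t n
  have h2 := multi q (n+1) t (n+1) (by omega) (fun _ => 1)
  have h3 := Gh_eq_Lh q hq hq1 t (n+1) 0 (by omega)
  simp only [mul_one] at h2
  refine Eq.trans ?_ h2.symm
  rw [h3, ← h1]
  rfl
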